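/- The blow-up solution with harmonic potential solves the equation: if Q is a smooth solution of the ground state equation, then u(t,x) = (ωδ/sin ω(τ−t))^{n/2} e^{iθ + iδ²ω cos(ωt)/(cos(ωτ) sin ω(τ−t)) − i(ω/2)|x/cos(ωt) − x₁|² cos(ωt)cos(ωτ)/sin ω(τ−t) − iω(|x|²/2)tan(ωt)} Q(ωδ((x − x₁cos ωt)/sin ω(τ−t) − x₀/ω)) satisfies i∂ₜu + (1/2)Δu = (ω²|x|²/2)u + λ|u|^{4/n}u for 0 < t < τ. -/

import Mathlib

/-- The Laplacian of a complex-valued function on `ℝⁿ`. -/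
noncomputable def laplacianC {n : ℕ} (f : EuclideanSpace ℝ (Fin n) → ℂ)
    (x : EuclideanSpace ℝ (Fin n)) : ℂ :=
  ∑ i : Fin n, fderiv ℝ (fun y => fderiv ℝ f y (EuclideanSpace.single i 1)) x
    (EuclideanSpace.single i 1)

/-- The Laplacian of a real-valued function on `ℝⁿ`. -/
noncomputable def laplacianR {n : ℕ} (f : EuclideanSpace ℝ (Fin n) → ℝ)
    (x : EuclideanSpace ℝ (Fin n)) : ℝ :=
  ∑ i : Fin n, fderiv ℝ (fun y => fderiv ℝ f y (EuclideanSpace.single i 1)) x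
    (EuclideanSpace.single i 1)

/-!
Look for solutions of the form `k^(n/2) e^{iφ} Q(k x + w)` with a quadratic phase
`φ(t, x) = p + b |x|² + ⟨v, x⟩` whose coefficients, like `k` and `w`, depend on time. Such a wave
solves the equation as soon as `φ` satisfies the Hamilton–Jacobi equation
`∂ₜφ + |∇φ|²/2 + ω²|x|²/2 = k²` and the argument `k x + w` of `Q` moves with velocity `-k ∇φ`,
because the factor `k^(n/2)` then compensates `Δφ`, and `k²` is the scaling of both `Δ` and the
critical nonlinearity. These conditions are ordinary differential equations for the coefficients,
and the explicit blow-up solution is the trigonometric solution of this system.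
-/

open Module InnerProductSpace
open scoped Laplacian Gradient

section Laplacian

variable {E F : Type*} [NormedAddCommGroup E] [InnerProductSpace ℝ E]
  [NormedAddCommGroup F] [NormedSpace ℝ F]

lemma fderiv_comp_smul_add (f : E → F) (k : ℝ) (w x : E) :
    fderiv ℝ (fun y => f (k • y + w)) x = k • fderiv ℝ f (k • x + w) := by
  rw [fderiv_comp_smul (f := fun y => f (y + w)), fderiv_comp_add_right]

lemma contDiff_comp_smul_add {r : WithTop ℕ∞} {f : E → F} (hf : ContDiff ℝ r f) (k : ℝ) (w : E) :
    ContDiff ℝ r (fun y => f (k • y + w)) :=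
  hf.comp ((contDiff_id.const_smul k).add contDiff_const)

lemma contDiff_cexp_I_mul {r : WithTop ℕ∞} {φ : E → ℝ} {f : E → ℂ} (hφ : ContDiff ℝ r φ)
    (hf : ContDiff ℝ r f) : ContDiff ℝ r (fun y => Complex.exp (Complex.I * φ y) * f y) :=
  (contDiff_const.mul (Complex.ofRealCLM.contDiff.comp hφ)).cexp.mul hf

lemma fderiv_cexp_I_mul_apply {φ : E → ℝ} {f : E → ℂ} {x : E} (hφ : DifferentiableAt ℝ φ x)
    (hf : DifferentiableAt ℝ f x) (e : E) :
    fderiv ℝ (fun y => Complex.exp (Complex.I * φ y) * f y) x e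
      = Complex.exp (Complex.I * φ x) * (Complex.I * fderiv ℝ φ x e * f x + fderiv ℝ f x e) := by
  have hφ' : HasFDerivAt (fun y => (φ y : ℂ)) (Complex.ofRealCLM.comp (fderiv ℝ φ x)) x :=
    Complex.ofRealCLM.hasFDerivAt.comp x hφ.hasFDerivAt
  rw [((hφ'.const_mul Complex.I).cexp.fun_mul hf.hasFDerivAt).fderiv]
  simp only [add_apply, smul_apply, smul_eq_mul, ContinuousLinearMap.comp_apply,
    Complex.ofRealCLM_apply]
  ring

lemma fderiv_fderiv_cexp_I_mul_apply {φ : E → ℝ} {f : E → ℂ} (hφ : ContDiff ℝ 2 φ)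
    (hf : ContDiff ℝ 2 f) (x e : E) :
    fderiv ℝ (fun y => fderiv ℝ (fun z => Complex.exp (Complex.I * φ z) * f z) y e) x e
      = Complex.exp (Complex.I * φ x) * (fderiv ℝ (fun y => fderiv ℝ f y e) x e
        + 2 * Complex.I * (fderiv ℝ φ x e * fderiv ℝ f x e)
        + (Complex.I * fderiv ℝ (fun y => fderiv ℝ φ y e) x e - (fderiv ℝ φ x e : ℂ) ^ 2)
          * f x) := by
  have hφd : Differentiable ℝ φ := hφ.differentiable two_ne_zero
  have hfd : Differentiable ℝ f := hf.differentiable two_ne_zero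
  have hφe : DifferentiableAt ℝ (fun y => fderiv ℝ φ y e) x :=
    (((hφ.fderiv_right (m := 1) (by norm_num)).differentiable one_ne_zero) x).clm_apply
      (differentiableAt_const e)
  have hfe : DifferentiableAt ℝ (fun y => fderiv ℝ f y e) x :=
    (((hf.fderiv_right (m := 1) (by norm_num)).differentiable one_ne_zero) x).clm_apply
      (differentiableAt_const e)
  have hφe' : HasFDerivAt (fun y => (fderiv ℝ φ y e : ℂ))
      (Complex.ofRealCLM.comp (fderiv ℝ (fun y => fderiv ℝ φ y e) x)) x :=
    Complex.ofRealCLM.hasFDerivAt.comp x hφe.hasFDerivAt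
  have hg := ((hφe'.const_mul Complex.I).fun_mul (hfd x).hasFDerivAt).fun_add hfe.hasFDerivAt
  simp_rw [fun y => fderiv_cexp_I_mul_apply (hφd y) (hfd y) e]
  rw [fderiv_cexp_I_mul_apply (hφd x) hg.differentiableAt, hg.fderiv]
  congr 1
  simp only [add_apply, smul_apply, smul_eq_mul, ContinuousLinearMap.comp_apply,
    Complex.ofRealCLM_apply]
  linear_combination (fderiv ℝ φ x e : ℂ) ^ 2 * f x * Complex.I_sq

variable [FiniteDimensional ℝ E]

lemma laplacian_eq_sum_fderiv_fderiv_apply {ι : Type*} [Fintype ι] (e : OrthonormalBasis ι ℝ E)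
    {f : E → F} {x : E} (hf : ContDiffAt ℝ 2 f x) :
    Δ f x = ∑ i, fderiv ℝ (fun y => fderiv ℝ f y (e i)) x (e i) := by
  have hf' : DifferentiableAt ℝ (fderiv ℝ f) x :=
    (hf.fderiv_right (m := 1) (by norm_num)).differentiableAt one_ne_zero
  simp [laplacian_eq_iteratedFDeriv_orthonormalBasis f e, iteratedFDeriv_two_apply,
    fderiv_clm_apply hf' (differentiableAt_const _)]

lemma laplacianC_eq_laplacian {n : ℕ} {f : EuclideanSpace ℝ (Fin n) → ℂ}
    {x : EuclideanSpace ℝ (Fin n)} (hf : ContDiffAt ℝ 2 f x) : laplacianC f x = Δ f x := by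
  simp [laplacianC, laplacian_eq_sum_fderiv_fderiv_apply (EuclideanSpace.basisFun (Fin n) ℝ) hf]

lemma laplacianR_eq_laplacian {n : ℕ} {f : EuclideanSpace ℝ (Fin n) → ℝ}
    {x : EuclideanSpace ℝ (Fin n)} (hf : ContDiffAt ℝ 2 f x) : laplacianR f x = Δ f x := by
  simp [laplacianR, laplacian_eq_sum_fderiv_fderiv_apply (EuclideanSpace.basisFun (Fin n) ℝ) hf]

lemma laplacian_comp_smul_add (f : E → F) (k : ℝ) (w x : E) :
    Δ (fun y => f (k • y + w)) x = k ^ 2 • Δ f (k • x + w) := by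
  have hfderiv : fderiv ℝ (fun y => f (k • y + w)) = k • fun y => fderiv ℝ f (k • y + w) :=
    funext (fderiv_comp_smul_add f k w)
  have hfderiv₂ : fderiv ℝ (fderiv ℝ (fun y => f (k • y + w))) x
      = k ^ 2 • fderiv ℝ (fderiv ℝ f) (k • x + w) := by
    rw [hfderiv, fderiv_const_smul_field (𝕜 := ℝ) (f := fun y => fderiv ℝ f (k • y + w)) k,
      Pi.smul_apply, fderiv_comp_smul_add, smul_smul, pow_two]
  simp [laplacian_eq_iteratedFDeriv_stdOrthonormalBasis, iteratedFDeriv_two_apply, hfderiv₂,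
    Finset.smul_sum]

lemma sum_fderiv_mul_apply_eq_apply_gradient {ι : Type*} [Fintype ι] (e : OrthonormalBasis ι ℝ E)
    (φ : E → ℝ) (L : E →L[ℝ] ℂ) (x : E) :
    ∑ i, (fderiv ℝ φ x (e i) : ℂ) * L (e i) = L (∇ φ x) := by
  conv_rhs => rw [← e.sum_repr' (∇ φ x), map_sum]
  simp [inner_gradient_right]

lemma sum_fderiv_sq_eq_norm_gradient_sq {ι : Type*} [Fintype ι] (e : OrthonormalBasis ι ℝ E)
    (φ : E → ℝ) (x : E) :
    ∑ i, fderiv ℝ φ x (e i) ^ 2 = ‖∇ φ x‖ ^ 2 := by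
  simp [← e.sum_sq_inner_left (∇ φ x), inner_gradient_left]

lemma laplacian_cexp_I_mul {φ : E → ℝ} {f : E → ℂ} (hφ : ContDiff ℝ 2 φ) (hf : ContDiff ℝ 2 f)
    (x : E) :
    Δ (fun y => Complex.exp (Complex.I * φ y) * f y) x
      = Complex.exp (Complex.I * φ x) * (Δ f x + 2 * Complex.I * fderiv ℝ f x (∇ φ x)
        + (Complex.I * Δ φ x - (‖∇ φ x‖ : ℂ) ^ 2) * f x) := by
  let e := stdOrthonormalBasis ℝ E
  have hgrad : ((‖∇ φ x‖ : ℂ)) ^ 2 = ∑ i, (fderiv ℝ φ x (e i) : ℂ) ^ 2 := by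
    exact_mod_cast (sum_fderiv_sq_eq_norm_gradient_sq e φ x).symm
  rw [hgrad, ← sum_fderiv_mul_apply_eq_apply_gradient e φ,
    laplacian_eq_sum_fderiv_fderiv_apply e (contDiff_cexp_I_mul hφ hf).contDiffAt,
    laplacian_eq_sum_fderiv_fderiv_apply e hf.contDiffAt,
    laplacian_eq_sum_fderiv_fderiv_apply e hφ.contDiffAt, Complex.ofReal_sum]
  simp only [fderiv_fderiv_cexp_I_mul_apply hφ hf, Finset.mul_sum, Finset.sum_mul,
    ← Finset.sum_add_distrib, ← Finset.sum_sub_distrib]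

end Laplacian

/-- The time-dependent parameters of the modulated wave
`k^(n/2) e^{i(p + b |x|² + ⟨v, x⟩)} Q(k x + w)`: `scale`, `shift`, `angle`, `chirp` and `frequency`
are `k`, `w`, `p`, `b` and `v`. -/
structure Modulation (E : Type*) where
  scale : ℝ → ℝ
  shift : ℝ → E
  angle : ℝ → ℝ
  chirp : ℝ → ℝ
  frequency : ℝ → E

namespace Modulation

variable {E : Type*} [NormedAddCommGroup E] [InnerProductSpace ℝ E] (m : Modulation E)

/-- The quadratic phase `φ(t, x) = p + b |x|² + ⟨v, x⟩` of a modulated wave. -/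
noncomputable def phase (t : ℝ) (x : E) : ℝ :=
  m.angle t + m.chirp t * ‖x‖ ^ 2 + inner ℝ (m.frequency t) x

/-- The velocity field `2 b x + v` of a modulated wave, the gradient of its phase. -/
noncomputable def velocity (t : ℝ) (x : E) : E :=
  (2 * m.chirp t) • x + m.frequency t

/-- The modulated wave `k^(n/2) e^{iφ(t, x)} Q(k x + w)` with profile `Q`, where `n = dim E`. -/
noncomputable def wave (Q : E → ℂ) (t : ℝ) (x : E) : ℂ :=
  (m.scale t ^ ((finrank ℝ E : ℝ) / 2) : ℝ) *
    (Complex.exp (Complex.I * m.phase t x) * Q (m.scale t • x + m.shift t))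

/-- The modulation equations at time `t` for the harmonic potential `ω² |x|² / 2`. -/
structure SolvesHarmonicFlowAt (ω t : ℝ) : Prop where
  scale : HasDerivAt m.scale (-(2 * m.chirp t * m.scale t)) t
  shift : HasDerivAt m.shift (-(m.scale t • m.frequency t)) t
  angle : HasDerivAt m.angle (m.scale t ^ 2 - ‖m.frequency t‖ ^ 2 / 2) t
  chirp : HasDerivAt m.chirp (-(2 * m.chirp t ^ 2 + ω ^ 2 / 2)) t
  frequency : HasDerivAt m.frequency (-((2 * m.chirp t) • m.frequency t)) t

lemma contDiff_phase {r : WithTop ℕ∞} (t : ℝ) : ContDiff ℝ r (m.phase t) :=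
  (contDiff_const.add (contDiff_const.mul (contDiff_norm_sq ℝ))).add
    (contDiff_const.inner ℝ contDiff_id)

lemma contDiff_wave {r : WithTop ℕ∞} {Q : E → ℂ} (hQ : ContDiff ℝ r Q) (t : ℝ) :
    ContDiff ℝ r (m.wave Q t) :=
  contDiff_const.mul
    (contDiff_cexp_I_mul (m.contDiff_phase t) (contDiff_comp_smul_add hQ (m.scale t) (m.shift t)))

lemma norm_wave (Q : E → ℂ) {t : ℝ} (hk : 0 ≤ m.scale t) (x : E) :
    ‖m.wave Q t x‖
      = m.scale t ^ ((finrank ℝ E : ℝ) / 2) * ‖Q (m.scale t • x + m.shift t)‖ := by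
  rw [wave, norm_mul, norm_mul, mul_comm Complex.I, Complex.norm_exp_ofReal_mul_I, one_mul,
    Complex.norm_of_nonneg (Real.rpow_nonneg hk _)]

lemma hasFDerivAt_phase (t : ℝ) (x : E) :
    HasFDerivAt (m.phase t) (innerSL ℝ (m.velocity t x)) x := by
  have hsq : HasFDerivAt (fun y : E => ‖y‖ ^ 2) (2 • innerSL ℝ x) x :=
    (hasStrictFDerivAt_norm_sq x).hasFDerivAt
  refine (((hsq.const_mul (m.chirp t)).const_add (m.angle t)).add
    (innerSL ℝ (m.frequency t)).hasFDerivAt).congr_fderiv ?_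
  ext y
  simp only [velocity, add_apply, smul_apply, coe_innerSL_apply, nsmul_eq_mul, Nat.cast_ofNat,
    smul_eq_mul, map_add, map_smul, add_left_inj]
  ring

variable {m} {ω t : ℝ}

lemma SolvesHarmonicFlowAt.hasDerivAt_phase (hm : m.SolvesHarmonicFlowAt ω t) (x : E) :
    HasDerivAt (fun s => m.phase s x)
      (m.scale t ^ 2 - ‖m.velocity t x‖ ^ 2 / 2 - ω ^ 2 * ‖x‖ ^ 2 / 2) t := by
  refine ((hm.angle.add (hm.chirp.mul_const (‖x‖ ^ 2))).add
    (hm.frequency.inner ℝ (hasDerivAt_const t x))).congr_deriv ?_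
  rw [velocity, norm_add_sq_real, norm_smul, mul_pow, Real.norm_eq_abs, sq_abs]
  simp only [inner_zero_right, inner_neg_left, real_inner_smul_left,
    real_inner_comm (m.frequency t) x]
  ring

lemma SolvesHarmonicFlowAt.hasDerivAt_scale_rpow (hm : m.SolvesHarmonicFlowAt ω t)
    (hk : 0 < m.scale t) (a : ℝ) :
    HasDerivAt (fun s => m.scale s ^ a) (-(2 * a * m.chirp t) * m.scale t ^ a) t := by
  refine (hm.scale.rpow_const (p := a) (Or.inl hk.ne')).congr_deriv ?_
  rw [Real.rpow_sub_one hk.ne']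
  field_simp

lemma SolvesHarmonicFlowAt.hasDerivAt_scale_smul_add_shift (hm : m.SolvesHarmonicFlowAt ω t)
    (x : E) :
    HasDerivAt (fun s => m.scale s • x + m.shift s) (-(m.scale t • m.velocity t x)) t := by
  refine ((hm.scale.smul_const x).add hm.shift).congr_deriv ?_
  rw [velocity]
  module

lemma SolvesHarmonicFlowAt.hasDerivAt_wave (hm : m.SolvesHarmonicFlowAt ω t)
    (hk : 0 < m.scale t) {Q : E → ℂ} {x : E}
    (hQ : DifferentiableAt ℝ Q (m.scale t • x + m.shift t)) :
    HasDerivAt (fun s => m.wave Q s x)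
      ((m.scale t ^ ((finrank ℝ E : ℝ) / 2) : ℝ) * (Complex.exp (Complex.I * m.phase t x) *
        ((Complex.I * ((m.scale t ^ 2 - ‖m.velocity t x‖ ^ 2 / 2 - ω ^ 2 * ‖x‖ ^ 2 / 2 : ℝ) : ℂ)
            - finrank ℝ E * m.chirp t) * Q (m.scale t • x + m.shift t)
          - m.scale t * fderiv ℝ Q (m.scale t • x + m.shift t) (m.velocity t x)))) t := by
  have hamp := (hm.hasDerivAt_scale_rpow hk ((finrank ℝ E : ℝ) / 2)).ofReal_comp
  have hexp := ((hm.hasDerivAt_phase x).ofReal_comp.const_mul Complex.I).cexp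
  have hprofile := hQ.hasFDerivAt.comp_hasDerivAt t (hm.hasDerivAt_scale_smul_add_shift x)
  refine (hamp.mul (hexp.mul hprofile)).congr_deriv ?_
  simp only [Pi.mul_apply, Function.comp_apply, map_neg, map_smul, Complex.real_smul]
  push_cast
  ring

variable (m) [FiniteDimensional ℝ E]

lemma gradient_phase (t : ℝ) (x : E) : ∇ (m.phase t) x = m.velocity t x :=
  HasGradientAt.gradient (m.hasFDerivAt_phase t x)

lemma laplacian_phase (t : ℝ) (x : E) : Δ (m.phase t) x = 2 * m.chirp t * finrank ℝ E := by
  have hvel : ∀ e, HasFDerivAt (fun y => inner ℝ (m.velocity t y) e)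
      ((2 * m.chirp t) • innerSL ℝ e) x := fun e => by
    refine ((((2 * m.chirp t) • innerSL ℝ e).hasFDerivAt).add_const
      (inner ℝ (m.frequency t) e)).congr_of_eventuallyEq (.of_forall fun y => ?_)
    simp [velocity, inner_add_left, inner_smul_left, real_inner_comm]
  rw [laplacian_eq_sum_fderiv_fderiv_apply (stdOrthonormalBasis ℝ E)
    (m.contDiff_phase t).contDiffAt]
  simp [fun y => (m.hasFDerivAt_phase t y).fderiv, fun e => (hvel e).fderiv, mul_comm]

lemma laplacian_wave {Q : E → ℂ} (hQ : ContDiff ℝ 2 Q) (t : ℝ) (x : E) :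
    Δ (m.wave Q t) x
      = (m.scale t ^ ((finrank ℝ E : ℝ) / 2) : ℝ) * (Complex.exp (Complex.I * m.phase t x) *
        ((m.scale t : ℂ) ^ 2 * Δ Q (m.scale t • x + m.shift t)
          + 2 * Complex.I * (m.scale t * fderiv ℝ Q (m.scale t • x + m.shift t) (m.velocity t x))
          + (Complex.I * (2 * m.chirp t * finrank ℝ E) - (‖m.velocity t x‖ : ℂ) ^ 2)
            * Q (m.scale t • x + m.shift t))) := by
  have hprofile : ContDiff ℝ 2 (fun y => Q (m.scale t • y + m.shift t)) :=
    contDiff_comp_smul_add hQ (m.scale t) (m.shift t)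
  refine (laplacian_smul ((m.scale t ^ ((finrank ℝ E : ℝ) / 2) : ℝ) : ℂ)
    (contDiff_cexp_I_mul (m.contDiff_phase t) hprofile).contDiffAt).trans ?_
  rw [laplacian_cexp_I_mul (m.contDiff_phase t) hprofile, laplacian_comp_smul_add,
    fderiv_comp_smul_add, gradient_phase, laplacian_phase]
  simp

lemma norm_wave_rpow_four_div_finrank [Nontrivial E] (Q : E → ℂ) {t : ℝ} (hk : 0 ≤ m.scale t)
    (x : E) :
    ‖m.wave Q t x‖ ^ ((4 : ℝ) / finrank ℝ E)
      = m.scale t ^ 2 * ‖Q (m.scale t • x + m.shift t)‖ ^ ((4 : ℝ) / finrank ℝ E) := by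
  have hdim : (finrank ℝ E : ℝ) ≠ 0 := by exact_mod_cast finrank_pos.ne'
  have hexponent : (finrank ℝ E : ℝ) / 2 * (4 / finrank ℝ E) = (2 : ℕ) := by
    field_simp
    norm_num
  rw [m.norm_wave Q hk, Real.mul_rpow (Real.rpow_nonneg hk _) (norm_nonneg _),
    ← Real.rpow_mul hk, hexponent, Real.rpow_natCast]

variable {m}

theorem SolvesHarmonicFlowAt.wave_solves_NLS [Nontrivial E] (hm : m.SolvesHarmonicFlowAt ω t)
    (hk : 0 < m.scale t) {lam : ℝ} {Q : E → ℂ} (hQreg : ContDiff ℝ 2 Q)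
    (hQ : ∀ y, -(1 / 2) * Δ Q y + Q y
      = -lam * ((‖Q y‖ ^ ((4 : ℝ) / finrank ℝ E) : ℝ) : ℂ) * Q y) (x : E) :
    Complex.I * deriv (fun s => m.wave Q s x) t + (1 / 2) * Δ (m.wave Q t) x
      = ((ω : ℂ) ^ 2 * (‖x‖ : ℂ) ^ 2 / 2) * m.wave Q t x
        + (lam : ℂ) * ((‖m.wave Q t x‖ ^ ((4 : ℝ) / finrank ℝ E) : ℝ) : ℂ) * m.wave Q t x := by
  rw [(hm.hasDerivAt_wave hk (hQreg.differentiable two_ne_zero _)).deriv, m.laplacian_wave hQreg,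
    m.norm_wave_rpow_four_div_finrank Q hk.le, wave]
  specialize hQ (m.scale t • x + m.shift t)
  push_cast
  generalize Complex.exp (Complex.I * m.phase t x) = e,
    ((m.scale t ^ ((finrank ℝ E : ℝ) / 2) : ℝ) : ℂ) = a at *
  linear_combination (-(a * e * (m.scale t : ℂ) ^ 2)) * hQ
    + a * e * ((m.scale t : ℂ) ^ 2 - (‖m.velocity t x‖ : ℂ) ^ 2 / 2 - ω ^ 2 * (‖x‖ : ℂ) ^ 2 / 2)
      * Q (m.scale t • x + m.shift t) * Complex.I_sq

end Modulation

section Trigonometry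

variable {ω τ t : ℝ}

lemma hasDerivAt_sin_mul_sub :
    HasDerivAt (fun s => Real.sin (ω * (τ - s))) (-(ω * Real.cos (ω * (τ - t)))) t := by
  refine (((hasDerivAt_id t).const_sub τ).const_mul ω).sin.congr_deriv ?_
  simp only [id_eq, mul_neg, mul_one]
  ring

lemma hasDerivAt_cos_mul_sub :
    HasDerivAt (fun s => Real.cos (ω * (τ - s))) (ω * Real.sin (ω * (τ - t))) t := by
  refine (((hasDerivAt_id t).const_sub τ).const_mul ω).cos.congr_deriv ?_
  simp only [id_eq, mul_neg, mul_one]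
  ring

lemma hasDerivAt_inv_sin_mul_sub (hsin : Real.sin (ω * (τ - t)) ≠ 0) :
    HasDerivAt (fun s => (Real.sin (ω * (τ - s)))⁻¹)
      (ω * Real.cos (ω * (τ - t)) / Real.sin (ω * (τ - t)) ^ 2) t := by
  refine (hasDerivAt_sin_mul_sub.fun_inv hsin).congr_deriv ?_
  ring

lemma hasDerivAt_cos_div_sin_mul_sub (hsin : Real.sin (ω * (τ - t)) ≠ 0) :
    HasDerivAt (fun s => Real.cos (ω * (τ - s)) / Real.sin (ω * (τ - s)))
      (ω / Real.sin (ω * (τ - t)) ^ 2) t := by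
  refine (hasDerivAt_cos_mul_sub.fun_div hasDerivAt_sin_mul_sub hsin).congr_deriv ?_
  congr 1
  linear_combination ω * Real.sin_sq_add_cos_sq (ω * (τ - t))

lemma cos_mul_eq_cos_mul_cos_sub_sin_mul_sin (ω τ t : ℝ) :
    Real.cos (ω * τ) = Real.cos (ω * t) * Real.cos (ω * (τ - t))
      - Real.sin (ω * t) * Real.sin (ω * (τ - t)) := by
  rw [← Real.cos_add]
  ring_nf

lemma hasDerivAt_cos_mul_div_sin_mul_sub (hsin : Real.sin (ω * (τ - t)) ≠ 0) :
    HasDerivAt (fun s => Real.cos (ω * s) / Real.sin (ω * (τ - s)))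
      (ω * Real.cos (ω * τ) / Real.sin (ω * (τ - t)) ^ 2) t := by
  refine (((hasDerivAt_id t).const_mul ω).cos.fun_div hasDerivAt_sin_mul_sub hsin).congr_deriv ?_
  rw [cos_mul_eq_cos_mul_cos_sub_sin_mul_sin ω τ t]
  simp only [id_eq, mul_one]
  ring

end Trigonometry

section Blowup

variable {E : Type*} [NormedAddCommGroup E] [InnerProductSpace ℝ E]

/-- The explicit blow-up solution with blow-up time `τ` of the critical NLS with harmonic potential,
for a complex-valued profile `Q` on a space of dimension `finrank ℝ E`. -/
noncomputable def harmonicBlowup (ω τ θ δ : ℝ) (x₀ x₁ : E) (Q : E → ℂ) (t : ℝ) (x : E) : ℂ :=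
  (((ω * δ / Real.sin (ω * (τ - t))) ^ ((finrank ℝ E : ℝ) / 2) : ℝ) : ℂ)
    * Complex.exp (Complex.I * (θ : ℂ)
        + Complex.I * (δ : ℂ) ^ 2 * (ω : ℂ) * ((Real.cos (ω * t) : ℝ) : ℂ)
          / (((Real.cos (ω * τ) : ℝ) : ℂ) * ((Real.sin (ω * (τ - t)) : ℝ) : ℂ))
        - Complex.I * ((ω : ℂ) / 2)
          * ((‖(Real.cos (ω * t))⁻¹ • x - x₁‖ : ℝ) : ℂ) ^ 2
          * ((Real.cos (ω * t) : ℝ) : ℂ) * ((Real.cos (ω * τ) : ℝ) : ℂ)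
          / ((Real.sin (ω * (τ - t)) : ℝ) : ℂ)
        - Complex.I * (ω : ℂ) * ((‖x‖ : ℝ) : ℂ) ^ 2 / 2
          * ((Real.tan (ω * t) : ℝ) : ℂ))
    * Q ((ω * δ) • ((Real.sin (ω * (τ - t)))⁻¹ • (x - Real.cos (ω * t) • x₁) - ω⁻¹ • x₀))

/-- The parameters of the blow-up solution as a modulated wave, obtained by expanding its phase in
powers of `x`; the chirp combines the two terms in `|x|²` by the addition formula for the cosine. -/
noncomputable def blowupModulation (ω τ θ δ : ℝ) (x₀ x₁ : E) : Modulation E where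
  scale t := ω * δ / Real.sin (ω * (τ - t))
  shift t := -(ω * δ * (Real.cos (ω * t) / Real.sin (ω * (τ - t)))) • x₁ - δ • x₀
  angle t := θ + (δ ^ 2 * ω / Real.cos (ω * τ) - ω / 2 * ‖x₁‖ ^ 2 * Real.cos (ω * τ))
    * (Real.cos (ω * t) / Real.sin (ω * (τ - t)))
  chirp t := -(ω / 2) * (Real.cos (ω * (τ - t)) / Real.sin (ω * (τ - t)))
  frequency t := (ω * Real.cos (ω * τ) * (Real.sin (ω * (τ - t)))⁻¹) • x₁

variable {ω τ t : ℝ}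

lemma blowupModulation_solvesHarmonicFlowAt (θ δ : ℝ) (x₀ x₁ : E) (hτ : Real.cos (ω * τ) ≠ 0)
    (hsin : Real.sin (ω * (τ - t)) ≠ 0) :
    (blowupModulation ω τ θ δ x₀ x₁).SolvesHarmonicFlowAt ω t where
  scale := by
    refine ((hasDerivAt_inv_sin_mul_sub hsin).const_mul (ω * δ)).congr_deriv ?_
    simp only [blowupModulation]
    field_simp
  shift := by
    refine ((((hasDerivAt_cos_mul_div_sin_mul_sub hsin).const_mul (ω * δ)).fun_neg.smul_const
      x₁).sub_const (δ • x₀)).congr_deriv ?_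
    simp only [blowupModulation, smul_smul, ← neg_smul]
    congr 1
    field_simp
  angle := by
    refine (((hasDerivAt_cos_mul_div_sin_mul_sub hsin).const_mul _).const_add θ).congr_deriv ?_
    simp only [blowupModulation, norm_smul, mul_pow, Real.norm_eq_abs, sq_abs]
    field_simp
  chirp := by
    refine ((hasDerivAt_cos_div_sin_mul_sub hsin).const_mul (-(ω / 2))).congr_deriv ?_
    simp only [blowupModulation]
    field_simp
    linear_combination ω ^ 2 * Real.sin_sq_add_cos_sq (ω * (τ - t))
  frequency := by
    refine (((hasDerivAt_inv_sin_mul_sub hsin).const_mul (ω * Real.cos (ω * τ))).smul_const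
      x₁).congr_deriv ?_
    simp only [blowupModulation, smul_smul, ← neg_smul]
    congr 1
    field_simp

lemma blowupModulation_phase (θ δ : ℝ) (x₀ x₁ : E) (hcos : Real.cos (ω * t) ≠ 0)
    (hsin : Real.sin (ω * (τ - t)) ≠ 0) (x : E) :
    (blowupModulation ω τ θ δ x₀ x₁).phase t x
      = θ + δ ^ 2 * ω * Real.cos (ω * t) / (Real.cos (ω * τ) * Real.sin (ω * (τ - t)))
        - ω / 2 * ‖(Real.cos (ω * t))⁻¹ • x - x₁‖ ^ 2 * Real.cos (ω * t) * Real.cos (ω * τ)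
          / Real.sin (ω * (τ - t))
        - ω * ‖x‖ ^ 2 / 2 * Real.tan (ω * t) := by
  have hnorm : ‖(Real.cos (ω * t))⁻¹ • x - x₁‖ ^ 2 = (Real.cos (ω * t))⁻¹ ^ 2 * ‖x‖ ^ 2
      - 2 * ((Real.cos (ω * t))⁻¹ * inner ℝ x₁ x) + ‖x₁‖ ^ 2 := by
    rw [norm_sub_sq_real, norm_smul, mul_pow, real_inner_smul_left, real_inner_comm,
      Real.norm_eq_abs, sq_abs]
  have haddition : Real.cos (ω * (τ - t)) = (Real.cos (ω * τ)
      + Real.sin (ω * t) * Real.sin (ω * (τ - t))) / Real.cos (ω * t) := by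
    rw [cos_mul_eq_cos_mul_cos_sub_sin_mul_sin ω τ t]
    field_simp
    ring
  have hangle : δ ^ 2 * ω * Real.cos (ω * t) / (Real.cos (ω * τ) * Real.sin (ω * (τ - t)))
      = δ ^ 2 * ω / Real.cos (ω * τ) * (Real.cos (ω * t) / Real.sin (ω * (τ - t))) := by
    ring
  rw [Modulation.phase, hnorm, hangle, Real.tan_eq_sin_div_cos]
  simp only [blowupModulation, real_inner_smul_left, haddition]
  generalize δ ^ 2 * ω / Real.cos (ω * τ) = a
  field_simp
  ring

lemma harmonicBlowup_eq_wave (θ δ : ℝ) (x₀ x₁ : E) (Q : E → ℂ) (hω : ω ≠ 0)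
    (hcos : Real.cos (ω * t) ≠ 0) (hsin : Real.sin (ω * (τ - t)) ≠ 0) :
    harmonicBlowup ω τ θ δ x₀ x₁ Q t = (blowupModulation ω τ θ δ x₀ x₁).wave Q t := by
  ext x
  rw [harmonicBlowup, Modulation.wave, mul_assoc, blowupModulation_phase θ δ x₀ x₁ hcos hsin]
  congr 3
  · push_cast
    ring
  · simp only [blowupModulation, smul_sub, smul_smul, mul_inv_cancel_right₀ hω, mul_comm ω δ]
    module

lemma contDiff_harmonicBlowup {r : WithTop ℕ∞} (θ δ : ℝ) (x₀ x₁ : E) {Q : E → ℂ}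
    (hQ : ContDiff ℝ r Q) (hω : ω ≠ 0) (hcos : Real.cos (ω * t) ≠ 0)
    (hsin : Real.sin (ω * (τ - t)) ≠ 0) :
    ContDiff ℝ r (harmonicBlowup ω τ θ δ x₀ x₁ Q t) := by
  rw [harmonicBlowup_eq_wave θ δ x₀ x₁ Q hω hcos hsin]
  exact Modulation.contDiff_wave _ hQ t

lemma harmonicBlowup_eventuallyEq_wave (θ δ : ℝ) (x₀ x₁ : E) (Q : E → ℂ) (hω : ω ≠ 0)
    (hcos : Real.cos (ω * t) ≠ 0) (hsin : Real.sin (ω * (τ - t)) ≠ 0) :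
    harmonicBlowup ω τ θ δ x₀ x₁ Q =ᶠ[nhds t] (blowupModulation ω τ θ δ x₀ x₁).wave Q := by
  have hcos' : ∀ᶠ s in nhds t, Real.cos (ω * s) ≠ 0 :=
    ContinuousAt.eventually_ne (by fun_prop) hcos
  have hsin' : ∀ᶠ s in nhds t, Real.sin (ω * (τ - s)) ≠ 0 :=
    ContinuousAt.eventually_ne (by fun_prop) hsin
  filter_upwards [hcos', hsin'] with s using harmonicBlowup_eq_wave θ δ x₀ x₁ Q hω

theorem explicit_blowup_solution_harmonic_NLS_general [FiniteDimensional ℝ E] [Nontrivial E]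
    (lam θ : ℝ) {δ : ℝ} (hτ : Real.cos (ω * τ) ≠ 0) (x₀ x₁ : E) (Q : E → ℂ) (hQreg : ContDiff ℝ 2 Q)
    (hQ : ∀ y, -(1 / 2) * Δ Q y + Q y
      = -lam * ((‖Q y‖ ^ ((4 : ℝ) / finrank ℝ E) : ℝ) : ℂ) * Q y)
    (hcos : Real.cos (ω * t) ≠ 0) (hscale : 0 < ω * δ / Real.sin (ω * (τ - t))) (x : E) :
    Complex.I * deriv (fun s => harmonicBlowup ω τ θ δ x₀ x₁ Q s x) t
        + (1 / 2) * Δ (harmonicBlowup ω τ θ δ x₀ x₁ Q t) x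
      = ((ω : ℂ) ^ 2 * (‖x‖ : ℂ) ^ 2 / 2) * harmonicBlowup ω τ θ δ x₀ x₁ Q t x
        + (lam : ℂ) * ((‖harmonicBlowup ω τ θ δ x₀ x₁ Q t x‖ ^ ((4 : ℝ) / finrank ℝ E) : ℝ) : ℂ)
          * harmonicBlowup ω τ θ δ x₀ x₁ Q t x := by
  have hω : ω ≠ 0 := by rintro rfl; simp at hscale
  have hsin : Real.sin (ω * (τ - t)) ≠ 0 := fun h => by simp [h] at hscale
  have hwave := harmonicBlowup_eventuallyEq_wave θ δ x₀ x₁ Q hω hcos hsin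
  have hderiv : deriv (fun s => harmonicBlowup ω τ θ δ x₀ x₁ Q s x) t
      = deriv (fun s => (blowupModulation ω τ θ δ x₀ x₁).wave Q s x) t :=
    (hwave.fun_comp (· x)).deriv_eq
  rw [hderiv, hwave.eq_of_nhds]
  exact (blowupModulation_solvesHarmonicFlowAt θ δ x₀ x₁ hτ hsin).wave_solves_NLS hscale hQreg hQ x

end Blowup

lemma groundState_ofReal {n : ℕ} {lam : ℝ} {Q : EuclideanSpace ℝ (Fin n) → ℝ}
    (hQreg : ContDiff ℝ 2 Q) {y : EuclideanSpace ℝ (Fin n)} (hQpos : 0 < Q y)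
    (hQ : -(1 / 2) * laplacianR Q y + Q y = -lam * Q y ^ ((1 : ℝ) + 4 / n)) :
    -(1 / 2) * Δ (fun z => (Q z : ℂ)) y + (Q y : ℂ)
      = -lam * ((‖(Q y : ℂ)‖ ^ ((4 : ℝ) / n) : ℝ) : ℂ) * Q y := by
  have hlaplacian : Δ (fun z => (Q z : ℂ)) y = ((Δ Q y : ℝ) : ℂ) :=
    hQreg.contDiffAt.laplacian_CLM_comp_left (l := Complex.ofRealCLM)
  rw [laplacianR_eq_laplacian hQreg.contDiffAt, Real.rpow_add hQpos, Real.rpow_one] at hQ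
  rw [hlaplacian, Complex.norm_of_nonneg hQpos.le, mul_assoc, mul_comm (Complex.ofReal (_ ^ _))]
  have hQC := congrArg Complex.ofReal hQ
  push_cast at hQC ⊢
  exact hQC

lemma cos_mul_pos {ω τ t : ℝ} (hω : 0 < ω) (hτ : τ < Real.pi / (2 * ω)) (ht : 0 < t)
    (htτ : t ≤ τ) : 0 < Real.cos (ω * t) := by
  have hωτ : τ * (2 * ω) < Real.pi := (lt_div_iff₀ (by positivity)).mp hτ
  refine Real.cos_pos_of_mem_Ioo ⟨?_, ?_⟩ <;> nlinarith [Real.pi_pos, mul_pos hω ht]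

lemma sin_mul_sub_pos {ω τ t : ℝ} (hω : 0 < ω) (hτ : τ < Real.pi / (2 * ω)) (ht : 0 < t)
    (htτ : t < τ) : 0 < Real.sin (ω * (τ - t)) := by
  have hωτ : τ * (2 * ω) < Real.pi := (lt_div_iff₀ (by positivity)).mp hτ
  exact Real.sin_pos_of_pos_of_lt_pi (mul_pos hω (sub_pos.mpr htτ)) (by nlinarith [mul_pos hω ht])

/-- the explicit blow-up solution with harmonic potential solves the
critical NLS with isotropic harmonic potential on `0 < t < τ`. -/
theorem explicit_blowup_solution_harmonic_NLS
    (n : ℕ) (hn : 1 ≤ n) (lam ω τ θ δ : ℝ) (hlam : lam < 0) (hω : 0 < ω)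
    (hτ : 0 < τ) (hτ' : τ < Real.pi / (2 * ω)) (hδ : 0 < δ)
    (x₀ x₁ : EuclideanSpace ℝ (Fin n))
    (Q : EuclideanSpace ℝ (Fin n) → ℝ)
    (hQreg : ContDiff ℝ (⊤ : ℕ∞) Q) (hQpos : ∀ x, 0 < Q x)
    (hQ : ∀ x, -(1 / 2) * laplacianR Q x + Q x = -lam * Q x ^ ((1 : ℝ) + 4 / n))
    (u : ℝ → EuclideanSpace ℝ (Fin n) → ℂ)
    (hu : ∀ t x, u t x
      = (((ω * δ / Real.sin (ω * (τ - t))) ^ ((n : ℝ) / 2) : ℝ) : ℂ)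
        * Complex.exp (Complex.I * (θ : ℂ)
            + Complex.I * (δ : ℂ) ^ 2 * (ω : ℂ) * ((Real.cos (ω * t) : ℝ) : ℂ)
              / (((Real.cos (ω * τ) : ℝ) : ℂ) * ((Real.sin (ω * (τ - t)) : ℝ) : ℂ))
            - Complex.I * ((ω : ℂ) / 2)
              * ((‖(Real.cos (ω * t))⁻¹ • x - x₁‖ : ℝ) : ℂ) ^ 2
              * ((Real.cos (ω * t) : ℝ) : ℂ) * ((Real.cos (ω * τ) : ℝ) : ℂ)
              / ((Real.sin (ω * (τ - t)) : ℝ) : ℂ)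
            - Complex.I * (ω : ℂ) * ((‖x‖ : ℝ) : ℂ) ^ 2 / 2
              * ((Real.tan (ω * t) : ℝ) : ℂ))
        * ((Q ((ω * δ) • ((Real.sin (ω * (τ - t)))⁻¹ • (x - Real.cos (ω * t) • x₁)
              - ω⁻¹ • x₀)) : ℝ) : ℂ)) :
    ∀ t x, 0 < t → t < τ →
      Complex.I * deriv (fun s => u s x) t + (1 / 2) * laplacianC (u t) x
        = ((ω : ℂ) ^ 2 * (‖x‖ : ℂ) ^ 2 / 2) * u t x
          + (lam : ℂ) * ((‖u t x‖ ^ ((4 : ℝ) / n) : ℝ) : ℂ) * u t x := by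
  intro t x ht htτ
  have : Nonempty (Fin n) := Fin.pos_iff_nonempty.mp hn
  have hcos : Real.cos (ω * t) ≠ 0 := (cos_mul_pos hω hτ' ht htτ.le).ne'
  have hcosτ : Real.cos (ω * τ) ≠ 0 := (cos_mul_pos hω hτ' hτ le_rfl).ne'
  have hsin : 0 < Real.sin (ω * (τ - t)) := sin_mul_sub_pos hω hτ' ht htτ
  have hQreg₂ : ContDiff ℝ 2 Q := contDiff_infty.mp hQreg 2
  have hQC : ContDiff ℝ 2 fun y => (Q y : ℂ) := Complex.ofRealCLM.contDiff.comp hQreg₂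
  obtain rfl : u = harmonicBlowup ω τ θ δ x₀ x₁ fun y => (Q y : ℂ) := by
    ext s y
    rw [hu, harmonicBlowup, finrank_euclideanSpace_fin]
  rw [laplacianC_eq_laplacian
    (contDiff_harmonicBlowup θ δ x₀ x₁ hQC hω.ne' hcos hsin.ne').contDiffAt]
  simpa only [finrank_euclideanSpace_fin] using
    explicit_blowup_solution_harmonic_NLS_general lam θ hcosτ x₀ x₁ (fun y => (Q y : ℂ)) hQC
      (fun y => by
        simpa only [finrank_euclideanSpace_fin] using groundState_ofReal hQreg₂ (hQpos y) (hQ y))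
      hcos (div_pos (mul_pos hω hδ) hsin) x
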